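/- Let G be a finite semiprimitive permutation group with point stabiliser H and regular normal nilpotent subgroup K. If p is a prime with O_p(H) ≠ 1, then p does not divide |K|. -/

import Mathlib

def Subgroup.IsTransitiveOn {G : Type*} [Group G] (Ω : Type*) [MulAction G Ω]
    (N : Subgroup G) : Prop :=
  ∀ a b : Ω, ∃ n ∈ N, n • a = b

def Subgroup.IsSemiregularOn {G : Type*} [Group G] (Ω : Type*) [MulAction G Ω]
    (N : Subgroup G) : Prop :=
  ∀ n ∈ N, ∀ a : Ω, n • a = a → n = 1

def IsSemiprimitiveAction (G Ω : Type*) [Group G] [MulAction G Ω] : Prop :=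
  MulAction.IsPretransitive G Ω ∧
    ∀ N : Subgroup G, N.Normal → N.IsTransitiveOn Ω ∨ N.IsSemiregularOn Ω

/-!
Let `P` be a nontrivial normal `p`-subgroup of the point stabiliser `H`. As `G = KH` and `H`
normalises `P`, the normal closure of `P` in `G` is `⁅K, P⁆P`. It is not semiregular, so it is
transitive; since `P` fixes a point, already `⁅K, P⁆ ≤ K` is transitive, and regularity of `K`
forces `K = ⁅K, P⁆`. Modulo the normal `p`-complement of `K`, the images of `K` and `P` generate
a `p`-group. That group is nilpotent, so the image of `K`, being equal to its commutator with the
image of `P`, is trivial: `K` is its own `p`-complement.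
-/

section Nilpotent

variable {G : Type*} [Group G]

theorem eq_bot_of_le_commutator_of_isNilpotent {A B : Subgroup G} [Group.IsNilpotent B]
    (hAB : A ≤ B) (hA : A ≤ ⁅A, B⁆) : A = ⊥ := by
  have hA_le (n : ℕ) : A ≤ B.lowerCentralSeries n := by
    induction n with
    | zero => exact hAB
    | succ n ih => exact hA.trans (Subgroup.commutator_mono ih le_rfl)
  obtain ⟨n, hn⟩ := B.isNilpotent_iff_lowerCentralSeries.1 ‹_›
  exact eq_bot_iff.2 (hn ▸ hA_le n)

theorem characteristic_of_coprime_card_index {N : Subgroup G} [N.Normal]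
    (h : (Nat.card N).Coprime N.index) : N.Characteristic := by
  rw [Subgroup.characteristic_iff_map_le]
  rintro φ _ ⟨x, hx, rfl⟩
  let y : G ⧸ N := φ x
  have hy_card : orderOf y ∣ Nat.card N :=
    ((orderOf_map_dvd (QuotientGroup.mk' N) (φ x)).trans (φ.orderOf_eq x).dvd).trans
      (N.orderOf_dvd_natCard hx)
  have hy_index : orderOf y ∣ N.index := orderOf_dvd_natCard y
  have hy : y = 1 := orderOf_eq_one_iff.1 (Nat.eq_one_of_dvd_coprimes h hy_card hy_index)
  exact (QuotientGroup.eq_one_iff _).1 hy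

variable [Finite G] {p : ℕ} [Fact p.Prime]

theorem eq_bot_of_le_commutator_of_isPGroup {A P : Subgroup G} (hA : IsPGroup p A)
    (hP : IsPGroup p P) (hPA : P ≤ Subgroup.normalizer A) (hcomm : A ≤ ⁅A, P⁆) : A = ⊥ := by
  have : Group.IsNilpotent ↥(A ⊔ P) := (hA.to_sup_of_normal_left' hP hPA).isNilpotent
  exact eq_bot_of_le_commutator_of_isNilpotent le_sup_left
    (hcomm.trans (Subgroup.commutator_mono le_rfl le_sup_right))

theorem exists_surjective_hom_sylow [Group.IsNilpotent G] (S : Sylow p G) :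
    ∃ f : G →* S, Function.Surjective f := by
  by_cases hdvd : p ∣ Nat.card G
  · let e : (∀ q : (Nat.card G).primeFactors, ∀ P : Sylow q G, P) ≃* G :=
      Sylow.directProductOfNormal inferInstance
    let q : (Nat.card G).primeFactors :=
      ⟨p, Nat.mem_primeFactors.2 ⟨Fact.out, hdvd, Nat.card_pos.ne'⟩⟩
    let proj : (∀ q : (Nat.card G).primeFactors, ∀ P : Sylow q G, P) →* S :=
      (Pi.evalMonoidHom (fun P : Sylow p G ↦ P) S).comp (Pi.evalMonoidHom _ q)
    have hproj : Function.Surjective proj :=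
      (Function.surjective_eval S).comp (Function.surjective_eval q)
    exact ⟨proj.comp e.symm.toMonoidHom, hproj.comp e.symm.surjective⟩
  · have hS : (S : Subgroup G) = ⊥ := by
      obtain hcard | hp := S.isPGroup'.card_eq_or_dvd
      · exact Subgroup.card_eq_one.1 hcard
      · exact absurd (hp.trans (S : Subgroup G).card_subgroup_dvd_card) hdvd
    have : Subsingleton S := hS ▸ inferInstance
    exact ⟨1, Function.surjective_to_subsingleton _⟩

theorem exists_characteristic_isComplement'_sylow [Group.IsNilpotent G] (S : Sylow p G) :
    ∃ Q : Subgroup G, Q.Characteristic ∧ Q.IsComplement' S := by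
  obtain ⟨f, hf⟩ := exists_surjective_hom_sylow S
  have hindex : f.ker.index = Nat.card S := by
    rw [Subgroup.index_ker, f.range_eq_top.2 hf, Subgroup.card_top]
  have hcard_mul : Nat.card f.ker * Nat.card S = Nat.card G :=
    hindex ▸ f.ker.card_mul_index
  have hcard : Nat.card f.ker = (S : Subgroup G).index :=
    Nat.eq_of_mul_eq_mul_right Nat.card_pos
      (hcard_mul.trans (S : Subgroup G).index_mul_card.symm)
  have hcoprime : (Nat.card f.ker).Coprime (Nat.card S) := hcard ▸ S.card_coprime_index.symm
  exact ⟨f.ker, characteristic_of_coprime_card_index (hindex ▸ hcoprime),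
    Subgroup.isComplement'_of_coprime hcard_mul hcoprime⟩

theorem not_dvd_card_of_le_commutator {K P : Subgroup G} [K.Normal] [Group.IsNilpotent K]
    (hP : IsPGroup p P) (hK : K ≤ ⁅K, P⁆) : ¬ p ∣ Nat.card K := by
  let S : Sylow p K := default
  obtain ⟨Q, hQ, hQS⟩ := exists_characteristic_isComplement'_sylow S
  let π : G →* G ⧸ Q.map K.subtype := QuotientGroup.mk' _
  have hker : π.ker = Q.map K.subtype := QuotientGroup.ker_mk' _
  have hcard : Nat.card (K.map π) = Nat.card S := by
    rw [← Subgroup.relIndex_ker, hker, Subgroup.relIndex, Subgroup.subgroupOf,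
      Subgroup.comap_map_eq_self_of_injective K.subtype_injective, hQS.symm.index_eq_card]
  have hKp : IsPGroup p (K.map π) :=
    IsPGroup.iff_card.2 (hcard ▸ IsPGroup.iff_card.1 S.isPGroup')
  have hKn : (K.map π).Normal := Subgroup.Normal.map ‹_› π (QuotientGroup.mk'_surjective _)
  have hKπ : K.map π = ⊥ :=
    eq_bot_of_le_commutator_of_isPGroup hKp (hP.map π) Subgroup.le_normalizer_of_normal
      (Subgroup.map_commutator K P π ▸ Subgroup.map_mono hK)
  have hS : (S : Subgroup K) = ⊥ :=
    Subgroup.card_eq_one.1 (by rw [← hcard, hKπ, Subgroup.card_bot])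
  exact fun hdvd ↦ S.ne_bot_of_dvd_card hdvd hS

end Nilpotent

section Action

variable {G Ω : Type*} [Group G] [MulAction G Ω]

theorem sup_stabilizer_eq_top_of_isTransitiveOn {K : Subgroup G} (hK : K.IsTransitiveOn Ω)
    (ω : Ω) : K ⊔ MulAction.stabilizer G ω = ⊤ := by
  refine eq_top_iff.2 fun g _ ↦ ?_
  obtain ⟨k, hk, hkg⟩ := hK ω (g • ω)
  have hstab : k⁻¹ * g ∈ MulAction.stabilizer G ω := by
    rw [MulAction.mem_stabilizer_iff, mul_smul, ← hkg, inv_smul_smul]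
  exact mul_inv_cancel_left k g ▸ Subgroup.mul_mem_sup hk hstab

theorem isTransitiveOn_of_isTransitiveOn_sup {C P : Subgroup G} {ω : Ω}
    (hPC : P ≤ Subgroup.normalizer C) (hP : P ≤ MulAction.stabilizer G ω)
    (h : (C ⊔ P).IsTransitiveOn Ω) : C.IsTransitiveOn Ω := by
  have hC (a : Ω) : ∃ c ∈ C, c • ω = a := by
    obtain ⟨g, hg, rfl⟩ := h ω a
    rw [← SetLike.mem_coe, Subgroup.coe_mul_of_right_le_normalizer_left C P hPC] at hg
    obtain ⟨c, hc, x, hx, rfl⟩ := hg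
    exact ⟨c, hc, by rw [mul_smul, hP hx]⟩
  intro a b
  obtain ⟨c, hc, rfl⟩ := hC a
  obtain ⟨d, hd, rfl⟩ := hC b
  exact ⟨d * c⁻¹, C.mul_mem hd (C.inv_mem hc), by rw [mul_smul, inv_smul_smul]⟩

theorem le_of_isTransitiveOn_of_isSemiregularOn [Nonempty Ω] {C K : Subgroup G} (hCK : C ≤ K)
    (hC : C.IsTransitiveOn Ω) (hK : K.IsSemiregularOn Ω) : K ≤ C := by
  intro k hk
  obtain ⟨ω⟩ := ‹Nonempty Ω›
  obtain ⟨c, hc, hck⟩ := hC ω (k • ω)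
  have hfix : (k⁻¹ * c) • ω = ω := by rw [mul_smul, hck, inv_smul_smul]
  rwa [inv_mul_eq_one.1 (hK _ (K.mul_mem (K.inv_mem hk) (hCK hc)) ω hfix)]

open scoped commutatorElement in
theorem normalClosure_eq_commutator_sup {K P : Subgroup G} [K.Normal]
    (h : K ⊔ Subgroup.normalizer P = ⊤) :
    Subgroup.normalClosure (P : Set G) = ⁅K, P⁆ ⊔ P := by
  have hcomm_le : ⁅K, P⁆ ≤ Subgroup.normalClosure (P : Set G) :=
    (Subgroup.commutator_mono le_rfl Subgroup.subset_normalClosure).trans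
      (Subgroup.commutator_le_right K _)
  refine le_antisymm ((Subgroup.closure_le _).2 fun y hy ↦ ?_)
    (sup_le hcomm_le Subgroup.subset_normalClosure)
  obtain ⟨x, hx, hxy⟩ := Group.mem_conjugatesOfSet_iff.1 hy
  obtain ⟨g, rfl⟩ := isConj_iff.1 hxy
  obtain ⟨k, hk, n, hn, rfl⟩ := Subgroup.mem_sup_of_normal_left.1 (h ▸ Subgroup.mem_top g)
  have hnx : n * x * n⁻¹ ∈ P := (Subgroup.mem_normalizer_iff.1 hn x).1 hx
  have hconj : k * n * x * (k * n)⁻¹ = ⁅k, n * x * n⁻¹⁆ * (n * x * n⁻¹) := by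
    rw [commutatorElement_def]
    group
  rw [hconj]
  exact Subgroup.mul_mem_sup (Subgroup.commutator_mem_commutator hk hnx) hnx

namespace IsSemiprimitiveAction

variable {P : Subgroup G} {ω : Ω}

theorem isTransitiveOn_normalClosure (h : IsSemiprimitiveAction G Ω) (hP : P ≠ ⊥)
    (hPω : P ≤ MulAction.stabilizer G ω) :
    (Subgroup.normalClosure (P : Set G)).IsTransitiveOn Ω := by
  refine (h.2 _ Subgroup.normalClosure_normal).resolve_right fun hsemireg ↦ hP ?_
  exact (Subgroup.eq_bot_iff_forall P).2 fun x hx ↦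
    hsemireg x (Subgroup.subset_normalClosure hx) ω (hPω hx)

theorem le_commutator (h : IsSemiprimitiveAction G Ω) {K : Subgroup G} [K.Normal]
    (htrans : K.IsTransitiveOn Ω) (hsreg : K.IsSemiregularOn Ω) (hP : P ≠ ⊥)
    (hPω : P ≤ MulAction.stabilizer G ω)
    (hnorm : MulAction.stabilizer G ω ≤ Subgroup.normalizer P) : K ≤ ⁅K, P⁆ := by
  have hKP : K ⊔ Subgroup.normalizer P = ⊤ :=
    top_le_iff.1 <| sup_stabilizer_eq_top_of_isTransitiveOn htrans ω ▸ sup_le_sup_left hnorm K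
  have hsup : (⁅K, P⁆ ⊔ P).IsTransitiveOn Ω :=
    normalClosure_eq_commutator_sup hKP ▸ h.isTransitiveOn_normalClosure hP hPω
  have hcomm : ⁅K, P⁆.IsTransitiveOn Ω :=
    isTransitiveOn_of_isTransitiveOn_sup (Subgroup.normalizer_commutator_ge_right K P) hPω hsup
  have : Nonempty Ω := ⟨ω⟩
  exact le_of_isTransitiveOn_of_isSemiregularOn (Subgroup.commutator_le_left K P) hcomm hsreg

end IsSemiprimitiveAction

end Action

/-- Lemma 2.6: if `G` is a finite semiprimitive group with point stabiliser `H` and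
regular normal nilpotent subgroup `K`, and `O_p(H) ≠ 1` (i.e. `H` has a nontrivial
normal `p`-subgroup) for a prime `p`, then `p` does not divide `|K|`. -/
theorem stmt6 {G Ω : Type*} [Group G] [Finite G] [MulAction G Ω] [FaithfulSMul G Ω]
    (hsp : IsSemiprimitiveAction G Ω) (K : Subgroup G) [K.Normal]
    (hnilp : Group.IsNilpotent K) (htrans : K.IsTransitiveOn Ω) (hsreg : K.IsSemiregularOn Ω)
    (ω : Ω) (p : ℕ) (hp : p.Prime)
    (hOp : ∃ P : Subgroup (MulAction.stabilizer G ω), P ≠ ⊥ ∧ P.Normal ∧ IsPGroup p P) :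
    ¬ p ∣ Nat.card K := by
  have : Fact p.Prime := ⟨hp⟩
  obtain ⟨P₀, hP₀, hP₀_normal, hP₀_pGroup⟩ := hOp
  let H := MulAction.stabilizer G ω
  let P : Subgroup G := P₀.map H.subtype
  have hP : P ≠ ⊥ := (Subgroup.map_eq_bot_iff_of_injective P₀ H.subtype_injective).not.2 hP₀
  have hPH : P ≤ H := Subgroup.map_subtype_le P₀
  have hnorm : H ≤ Subgroup.normalizer P := by
    have h := Subgroup.le_normalizer_map (H := P₀) H.subtype
    rwa [Subgroup.normalizer_eq_top, ← MonoidHom.range_eq_map, Subgroup.range_subtype] at h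
  exact not_dvd_card_of_le_commutator (hP₀_pGroup.map _)
    (hsp.le_commutator htrans hsreg hP hPH hnorm)
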